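/- For every r ≥ 2 and g ≥ 3 there exists an r-regular simple graph of girth at least g with at most 4·g·r^g vertices. -/

import Mathlib

/-!
Among the graphs on the given vertices with maximum degree at most `r` and girth greater than `k`,
take one whose degree function is maximal in the pointwise order. If it is not `r`-regular, then by
parity at least two units of degree are missing, at vertices `x` and `y` (possibly equal). Balls of
radius `k` are small, so most vertices are far from both. A far vertex of degree less than `r` could
be joined to `x`; hence all far vertices have degree `r`, and as they form a majority, two of them,
`u` and `v`, are adjacent. Replacing the edge `uv` by `ux` and `vy` creates no short cycle and
increases the degrees at `x` and `y` only, a contradiction.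
-/

open SimpleGraph Finset

section Girth

variable {V : Type*} {G : SimpleGraph V}

theorem egirth_le_edist_deleteEdges_add_one {u v : V} (huv : G.Adj u v) :
    G.egirth ≤ (G.deleteEdges {s(u, v)}).edist u v + 1 := by
  classical
  by_cases htop : (G.deleteEdges {s(u, v)}).edist u v = ⊤
  · simp [htop]
  obtain ⟨p, hp⟩ := exists_walk_of_edist_ne_top htop
  have hle : G.deleteEdges {s(u, v)} ≤ G := deleteEdges_le _
  have huv_notMem : s(v, u) ∉ (p.bypass.mapLe hle).edges := fun hmem ↦ by
    rw [Walk.edges_mapLe_eq_edges] at hmem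
    simpa [Sym2.eq_swap] using p.bypass.edges_subset_edgeSet hmem
  have hcycle : (Walk.cons huv.symm (p.bypass.mapLe hle)).IsCycle :=
    (Walk.cons_isCycle_iff _ _).2 ⟨p.bypass_isPath.mapLe hle, huv_notMem⟩
  calc G.egirth ≤ (Walk.cons huv.symm (p.bypass.mapLe hle)).length := egirth_le_length hcycle
    _ ≤ p.length + 1 := by simpa using p.length_bypass_le_length
    _ = (G.deleteEdges {s(u, v)}).edist u v + 1 := by rw [hp]

theorem exists_eq_append_cons_of_mem_edges {a b : V} {p : G.Walk a b} {e : Sym2 V}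
    (he : e ∈ p.edges) :
    ∃ (x y : V) (h : G.Adj x y) (q : G.Walk a x) (r : G.Walk y b),
      s(x, y) = e ∧ p = q.append (.cons h r) := by
  induction p with
  | nil => simp at he
  | cons h p ih =>
    rw [Walk.edges_cons, List.mem_cons] at he
    obtain rfl | he := he
    · exact ⟨_, _, h, .nil, p, rfl, rfl⟩
    · obtain ⟨x, y, hxy, q, r, hxye, rfl⟩ := ih he
      exact ⟨x, y, hxy, .cons h q, r, hxye, rfl⟩

theorem min_edist_deleteEdges_add_one_le_length {a b s t : V} {p : G.Walk a b} (hp : p.IsTrail)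
    (hst : s(s, t) ∈ p.edges) :
    min ((G.deleteEdges {s(s, t)}).edist a s + (G.deleteEdges {s(s, t)}).edist t b)
      ((G.deleteEdges {s(s, t)}).edist a t + (G.deleteEdges {s(s, t)}).edist s b) + 1 ≤
      p.length := by
  obtain ⟨x, y, hxy, q, r, hxyst, rfl⟩ := exists_eq_append_cons_of_mem_edges hst
  have hnodup := hp.edges_nodup
  rw [Walk.edges_append, Walk.edges_cons, List.nodup_middle, List.nodup_cons, List.mem_append,
    not_or, hxyst] at hnodup
  obtain ⟨⟨hq, hr⟩, -⟩ := hnodup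
  have hlen : (G.deleteEdges {s(s, t)}).edist a x + (G.deleteEdges {s(s, t)}).edist y b + 1 ≤
      (q.append (.cons hxy r)).length := by
    grw [edist_le (q.toDeleteEdge _ hq), edist_le (r.toDeleteEdge _ hr)]
    simp [add_assoc]
  obtain ⟨rfl, rfl⟩ | ⟨rfl, rfl⟩ := Sym2.eq_iff.1 hxyst
  · grw [min_le_left, hlen]
  · grw [min_le_right, hlen]

theorem edist_deleteEdges_add_one_le_length {a s t : V} {c : G.Walk a a} (hc : c.IsTrail)
    (hst : s(s, t) ∈ c.edges) : (G.deleteEdges {s(s, t)}).edist s t + 1 ≤ c.length := by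
  grw [← min_edist_deleteEdges_add_one_le_length hc hst]
  gcongr
  refine le_min ?_ ?_
  · rw [edist_comm, add_comm]
    exact SimpleGraph.edist_triangle
  · rw [add_comm]
    exact SimpleGraph.edist_triangle

theorem deleteEdges_sup_edge_le (s t : V) : (G ⊔ edge s t).deleteEdges {s(s, t)} ≤ G := by
  simp [deleteEdges_sup]

theorem min_egirth_edist_le_egirth_sup_edge (s t : V) :
    min G.egirth (G.edist s t + 1) ≤ (G ⊔ edge s t).egirth := by
  refine le_egirth.2 fun a c hc ↦ ?_
  by_cases hst : s(s, t) ∈ c.edges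
  · grw [min_le_right, ← edist_deleteEdges_add_one_le_length hc.isTrail hst,
      edist_anti (deleteEdges_sup_edge_le s t)]
  · let c' := (c.toDeleteEdge s(s, t) hst).mapLe (deleteEdges_sup_edge_le s t)
    have hc' : c'.IsCycle := Walk.IsCycle.mapLe _ (Walk.IsCycle.toDeleteEdges _ _ hc _)
    calc min G.egirth (G.edist s t + 1) ≤ G.egirth := min_le_left _ _
      _ ≤ c'.length := egirth_le_length hc'
      _ = c.length := by simp [c']

theorem min_edist_le_edist_sup_edge (s t a b : V) :
    min (G.edist a b) (min (G.edist a s + G.edist t b) (G.edist a t + G.edist s b) + 1) ≤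
      (G ⊔ edge s t).edist a b := by
  classical
  refine le_iInf fun p ↦ ?_
  grw [← p.length_bypass_le_length]
  by_cases hst : s(s, t) ∈ p.bypass.edges
  · grw [min_le_right, ← min_edist_deleteEdges_add_one_le_length p.bypass_isPath.isTrail hst]
    gcongr <;> exact deleteEdges_sup_edge_le s t
  · let q := (p.bypass.toDeleteEdge s(s, t) hst).mapLe (deleteEdges_sup_edge_le s t)
    calc _ ≤ G.edist a b := min_le_left _ _
      _ ≤ q.length := edist_le q
      _ = p.bypass.length := by simp [q]

/-- The graph obtained by removing the edge `uv` and joining its ends to `x` and `y`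
respectively. -/
def redirectEdge (G : SimpleGraph V) (u v x y : V) : SimpleGraph V :=
  G.deleteEdges {s(u, v)} ⊔ edge u x ⊔ edge v y

theorem le_egirth_redirectEdge {l : ℕ∞} {u v x y : V} (hl : l ≤ G.egirth) (huv : G.Adj u v)
    (hux : l ≤ G.edist u x + 1) (hvx : l ≤ G.edist v x + 1) (hvy : l ≤ G.edist v y + 1) :
    l ≤ (redirectEdge G u v x y).egirth := by
  have hle : G.deleteEdges {s(u, v)} ≤ G := deleteEdges_le _
  have huv' : l ≤ (G.deleteEdges {s(u, v)}).edist v u + 1 := by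
    grw [hl, egirth_le_edist_deleteEdges_add_one huv, edist_comm]
  have hvy' : l ≤ (G.deleteEdges {s(u, v)} ⊔ edge u x).edist v y + 1 := by
    grw [edist_anti hle] at hvx hvy
    grw [← min_edist_le_edist_sup_edge]
    simp only [← min_add_add_right]
    refine le_min hvy (le_min ?_ ?_)
    · exact huv'.trans (by gcongr; exact le_self_add.trans le_self_add)
    · exact hvx.trans (by gcongr; exact le_self_add.trans le_self_add)
  grw [redirectEdge, ← min_egirth_edist_le_egirth_sup_edge, ← min_egirth_edist_le_egirth_sup_edge,
    ← egirth_anti hle, ← edist_anti hle]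
  exact le_min (le_min hl hux) hvy'

end Girth

section Degree

variable {V : Type*} {G : SimpleGraph V}

theorem deleteEdges_sup_edge_eq {s t : V} (hst : G.Adj s t) :
    G.deleteEdges {s(s, t)} ⊔ edge s t = G :=
  sdiff_sup_cancel ((edge_le_iff G).2 (.inr hst))

theorem not_adj_deleteEdges_sup_edge {u v x y : V} (hvy : ¬G.Adj v y) (huv : u ≠ v) (huy : u ≠ y) :
    ¬(G.deleteEdges {s(u, v)} ⊔ edge u x).Adj v y := by
  grind [deleteEdges_adj]

variable [DecidableEq V]

theorem degree_edge {s t : V} (hst : s ≠ t) (w : V) [Fintype ((edge s t).neighborSet w)] :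
    (edge s t).degree w = (Pi.single s 1 + Pi.single t 1 : V → ℕ) w := by
  rw [← card_neighborFinset_eq_degree, Pi.add_apply]
  obtain rfl | hws := eq_or_ne w s
  · have : (edge w t).neighborFinset w = {t} := by ext; grind [mem_neighborFinset]
    simp [this, hst]
  obtain rfl | hwt := eq_or_ne w t
  · have : (edge s w).neighborFinset w = {s} := by ext; grind [mem_neighborFinset]
    simp [this, hws]
  · have : (edge s t).neighborFinset w = ∅ := by ext; grind [mem_neighborFinset]
    simp [this, hws, hwt]

theorem degree_sup_edge {s t : V} (hst : s ≠ t) (hadj : ¬G.Adj s t) (w : V)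
    [Fintype (G.neighborSet w)] [Fintype ((G ⊔ edge s t).neighborSet w)] :
    (G ⊔ edge s t).degree w = G.degree w + (Pi.single s 1 + Pi.single t 1 : V → ℕ) w := by
  have : Fintype ((edge s t).neighborSet w) :=
    Set.fintypeSubset ((G ⊔ edge s t).neighborSet w) fun _ ↦ .inr
  rw [← degree_edge hst]
  simp only [← card_neighborFinset_eq_degree]
  rw [neighborFinset_sup_of_disjoint w ((disjoint_edge G).2 hadj), card_disjUnion]

theorem degree_deleteEdges_add {s t : V} (hst : G.Adj s t) (w : V) [Fintype (G.neighborSet w)]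
    [Fintype ((G.deleteEdges {s(s, t)}).neighborSet w)] :
    (G.deleteEdges {s(s, t)}).degree w + (Pi.single s 1 + Pi.single t 1 : V → ℕ) w =
      G.degree w := by
  have hsup := deleteEdges_sup_edge_eq hst
  have : Fintype ((G.deleteEdges {s(s, t)} ⊔ edge s t).neighborSet w) := by rwa [hsup]
  rw [← degree_sup_edge hst.ne (by simp)]
  congr!

theorem degree_redirectEdge {u v x y : V} (huv : G.Adj u v) (hux : u ≠ x) (hux' : ¬G.Adj u x)
    (hvy : v ≠ y) (hvy' : ¬G.Adj v y) (huy : u ≠ y) (w : V) [Fintype (G.neighborSet w)]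
    [Fintype ((redirectEdge G u v x y).neighborSet w)] :
    (redirectEdge G u v x y).degree w = G.degree w + (Pi.single x 1 + Pi.single y 1 : V → ℕ) w := by
  let H₁ := G.deleteEdges {s(u, v)}
  let H₂ := H₁ ⊔ edge u x
  let _ : Fintype ((H₂ ⊔ edge v y).neighborSet w) :=
    ‹Fintype ((redirectEdge G u v x y).neighborSet w)›
  classical
  have : Fintype (H₂.neighborSet w) :=
    Set.fintypeSubset ((H₂ ⊔ edge v y).neighborSet w) fun _ ↦ .inl
  have : Fintype (H₁.neighborSet w) := Set.fintypeSubset (H₂.neighborSet w) fun _ ↦ .inl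
  have hux₁ : ¬H₁.Adj u x := fun h ↦ hux' (deleteEdges_le _ h)
  calc (redirectEdge G u v x y).degree w
      = H₂.degree w + (Pi.single v 1 + Pi.single y 1 : V → ℕ) w :=
        degree_sup_edge hvy (not_adj_deleteEdges_sup_edge hvy' huv.ne huy) w
    _ = H₁.degree w + (Pi.single u 1 + Pi.single x 1 : V → ℕ) w +
        (Pi.single v 1 + Pi.single y 1 : V → ℕ) w := by rw [degree_sup_edge hux hux₁]
    _ = H₁.degree w + (Pi.single u 1 + Pi.single v 1 : V → ℕ) w +
        (Pi.single x 1 + Pi.single y 1 : V → ℕ) w := by simp only [Pi.add_apply]; ring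
    _ = G.degree w + (Pi.single x 1 + Pi.single y 1 : V → ℕ) w := by
      rw [degree_deleteEdges_add huv]

end Degree

section Counting

variable {V : Type*} {G : SimpleGraph V}

theorem ball_add_one_subset (x : V) (k : ℕ) :
    G.ball x (k + 1) ⊆ insert x (⋃ w ∈ G.ball x k, G.neighborSet w) := by
  intro v hv
  rw [mem_ball] at hv
  obtain ⟨p, hp⟩ := exists_walk_of_edist_ne_top hv.ne_top
  cases p with
  | nil => exact .inl rfl
  | @cons _ w _ h p =>
    have hpk : p.length < k := by
      rw [← hp, Walk.length_cons] at hv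
      norm_cast at hv
      lia
    have hw : w ∈ G.ball x k := (edist_le p).trans_lt (by exact_mod_cast hpk)
    exact .inr (Set.mem_biUnion hw h.symm)

theorem encard_ball_le [G.LocallyFinite] {d : ℕ} (hd : ∀ w, G.degree w ≤ d) (x : V) (k : ℕ) :
    (G.ball x k).encard ≤ (∑ i ∈ range k, d ^ i : ℕ) := by
  induction k with
  | zero => simp
  | succ k ih =>
    obtain ⟨s, hs⟩ := (Set.finite_of_encard_le_coe ih).exists_finset_coe
    rw [← hs, Set.encard_coe_eq_coe_finsetCard, Nat.cast_le] at ih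
    have hdeg (w : V) : (G.neighborSet w).encard ≤ d := by
      rw [Set.encard_eq_coe_toFinset_card, Nat.cast_le]
      exact hd w
    calc (G.ball x (k + 1)).encard
        ≤ (insert x (⋃ w ∈ s, G.neighborSet w)).encard := by
          grw [ball_add_one_subset, ← hs]; rfl
      _ ≤ ∑ w ∈ s, (G.neighborSet w).encard + 1 := by
          grw [Set.encard_insert_le, set_encard_biUnion_le]
      _ ≤ (d * #s + 1 : ℕ) := by
          grw [sum_le_card_nsmul _ _ _ fun w _ ↦ hdeg w]
          simp [mul_comm]
      _ ≤ (∑ i ∈ range (k + 1), d ^ i : ℕ) := by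
          grw [geom_sum_succ, ih]

theorem exists_adj_mem_of_card_compl_lt [Fintype V] [DecidableEq V] [DecidableRel G.Adj] {r : ℕ}
    (hr : 0 < r) {s : Finset V} (hs : ∀ v ∈ s, r ≤ G.degree v) (hsc : ∀ v ∈ sᶜ, G.degree v ≤ r)
    (hcard : #sᶜ < #s) : ∃ u ∈ s, ∃ v ∈ s, G.Adj u v := by
  by_contra! h
  have habove : ∀ u ∈ s, r ≤ #(bipartiteAbove G.Adj sᶜ u) := fun u hu ↦ by
    grw [hs u hu, ← card_neighborFinset_eq_degree]
    exact card_le_card fun v hv ↦ by grind [mem_bipartiteAbove, mem_neighborFinset, mem_compl]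
  have hbelow : ∀ v ∈ sᶜ, #(bipartiteBelow G.Adj s v) ≤ r := fun v hv ↦ by
    grw [← hsc v hv, ← card_neighborFinset_eq_degree]
    exact card_le_card fun u hu ↦ by grind [mem_bipartiteBelow, mem_neighborFinset, G.adj_comm]
  exact hcard.not_ge (Nat.le_of_mul_le_mul_right (card_mul_le_card_mul G.Adj habove hbelow) hr)

theorem pi_single_one_le {ι : Type*} [DecidableEq ι] {f : ι → ℕ} {i : ι} (hi : f i ≠ 0) :
    Pi.single i 1 ≤ f := by
  intro j
  obtain rfl | hj := eq_or_ne j i <;> simp_all [Nat.one_le_iff_ne_zero]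

theorem pi_single_one_add_single_one_le {ι : Type*} [DecidableEq ι] {f : ι → ℕ} {i j : ι}
    (hij : i ≠ j) (hi : f i ≠ 0) (hj : f j ≠ 0) : Pi.single i 1 + Pi.single j 1 ≤ f := by
  have hj' : (f - Pi.single i 1 : ι → ℕ) j ≠ 0 := by simpa [hij.symm] using hj
  grw [pi_single_one_le hj', add_tsub_cancel_of_le (pi_single_one_le hi)]

theorem exists_single_add_single_le_of_even_sum {ι : Type*} [Fintype ι] [DecidableEq ι]
    {f : ι → ℕ} (hf : Even (∑ i, f i)) (hne : f ≠ 0) :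
    ∃ i j, Pi.single i 1 + Pi.single j 1 ≤ f := by
  obtain ⟨i, hi⟩ := Function.ne_iff.1 hne
  have hrest : f - Pi.single i 1 ≠ 0 := by
    intro h
    obtain rfl : f = Pi.single i 1 := (tsub_eq_zero_iff_le.1 h).antisymm (pi_single_one_le hi)
    simp at hf
  obtain ⟨j, hj⟩ := Function.ne_iff.1 hrest
  refine ⟨i, j, ?_⟩
  grw [pi_single_one_le hj, add_tsub_cancel_of_le (pi_single_one_le hi)]

theorem minDegree_le_one_of_isAcyclic [Fintype V] [DecidableRel G.Adj] (hG : G.IsAcyclic) :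
    G.minDegree ≤ 1 := by
  classical
  obtain hV | hV := subsingleton_or_nontrivial V
  · simp [minDegree_of_subsingleton]
  · obtain ⟨F, hGF, -, hF⟩ := connected_top.exists_isTree_le_of_le_of_isAcyclic le_top hG
    grw [minDegree_le_minDegree hGF, hF.minDegree_eq_one_of_nontrivial]

end Counting

section Regular

variable {V : Type*} {G : SimpleGraph V}

theorem one_lt_edist_iff {u v : V} : 1 < G.edist u v ↔ u ≠ v ∧ ¬G.Adj u v := by
  rw [← not_le, edist_le_one_iff_adj_or_eq, not_or, and_comm]

variable [Fintype V]

open scoped Classical in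
theorem exists_forall_le_edist_and_degree_lt_or_adj {r : ℕ} (hr : 0 < r)
    (hdeg : ∀ w, G.degree w ≤ r) {k : ℕ} (hcard : 4 * ∑ i ∈ range k, r ^ i < Fintype.card V)
    (x y : V) :
    ∃ u, k ≤ G.edist u x ∧ k ≤ G.edist u y ∧
      (G.degree u < r ∨ ∃ v, G.Adj u v ∧ k ≤ G.edist v x ∧ k ≤ G.edist v y) := by
  let far : Finset V := {w | k ≤ G.edist w x ∧ k ≤ G.edist w y}
  have hnear : (farᶜ : Finset V) = (G.ball x k).toFinset ∪ (G.ball y k).toFinset := by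
    ext w
    simp [far, imp_iff_not_or]
  have hball (z : V) : #(G.ball z k).toFinset ≤ ∑ i ∈ range k, r ^ i := by
    rw [← Nat.cast_le (α := ℕ∞), ← Set.encard_eq_coe_toFinset_card]
    exact encard_ball_le hdeg z k
  have hnear_lt : #farᶜ < #far := by
    have := card_union_le (G.ball x k).toFinset (G.ball y k).toFinset
    have := far.card_add_card_compl
    have := hball x
    have := hball y
    lia
  by_cases! hlt : ∃ u ∈ far, G.degree u < r
  · obtain ⟨u, hu, hur⟩ := hlt
    obtain ⟨hux, huy⟩ := by simpa [far] using hu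
    exact ⟨u, hux, huy, .inl hur⟩
  · obtain ⟨u, hu, v, hv, huv⟩ :=
      exists_adj_mem_of_card_compl_lt hr hlt (fun v _ ↦ hdeg v) hnear_lt
    obtain ⟨hux, huy⟩ := by simpa [far] using hu
    exact ⟨u, hux, huy, .inr ⟨v, huv, by simpa [far] using hv⟩⟩

theorem even_sum_tsub_degree [DecidableRel G.Adj] {r : ℕ} (heven : Even (r * Fintype.card V))
    (hdeg : ∀ w, G.degree w ≤ r) : Even (∑ w, (r - G.degree w)) := by
  have hsum : ∑ w, (r - G.degree w) + 2 * #G.edgeFinset = r * Fintype.card V := by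
    rw [← G.sum_degrees_eq_twice_card_edges, ← sum_add_distrib]
    simp [tsub_add_cancel_of_le (hdeg _), mul_comm]
  rwa [← hsum, Nat.even_add, iff_true_right (even_two_mul _)] at heven

open scoped Classical in
theorem exists_degree_lt_degree_of_not_isRegularOfDegree {r k : ℕ} (hk : 2 ≤ k)
    (heven : Even (r * Fintype.card V)) (hcard : 4 * ∑ i ∈ range k, r ^ i < Fintype.card V)
    (hgirth : k + 1 ≤ G.egirth) (hdeg : ∀ w, G.degree w ≤ r) (hreg : ¬G.IsRegularOfDegree r) :
    ∃ G' : SimpleGraph V, k + 1 ≤ G'.egirth ∧ (∀ w, G'.degree w ≤ r) ∧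
      (fun w ↦ G.degree w) < fun w ↦ G'.degree w := by
  have hne : (fun w ↦ r - G.degree w) ≠ 0 := fun h ↦
    hreg fun w ↦ (hdeg w).antisymm (tsub_eq_zero_iff_le.1 (congrFun h w))
  obtain ⟨x, y, hxy⟩ :=
    exists_single_add_single_le_of_even_sum (even_sum_tsub_degree heven hdeg) hne
  have hx : r - G.degree x ≠ 0 := by
    have : 1 + (Pi.single y 1 : V → ℕ) x ≤ r - G.degree x := by simpa using hxy x
    lia
  suffices ∃ (G' : SimpleGraph V) (a b : V), k + 1 ≤ G'.egirth ∧
      (∀ w, G'.degree w = G.degree w + (Pi.single a 1 + Pi.single b 1 : V → ℕ) w) ∧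
      Pi.single a 1 + Pi.single b 1 ≤ fun w ↦ r - G.degree w by
    obtain ⟨G', a, b, hgirth', hdeg', hle⟩ := this
    refine ⟨G', hgirth', fun w ↦ ?_, Pi.lt_def.2 ⟨fun w ↦ ?_, a, ?_⟩⟩
    · grw [hdeg', hle w, add_tsub_cancel_of_le (hdeg w)]
    · simp [hdeg']
    · simp [hdeg']
  have hfar {u v : V} (h : k ≤ G.edist u v) : u ≠ v ∧ ¬G.Adj u v :=
    one_lt_edist_iff.1 (lt_of_lt_of_le (by exact_mod_cast hk) h)
  obtain ⟨u, hux, huy, hu | ⟨v, huv, hvx, hvy⟩⟩ :=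
    exists_forall_le_edist_and_degree_lt_or_adj (by lia) hdeg hcard x y
  · refine ⟨G ⊔ edge u x, u, x, ?_, fun w ↦ ?_, ?_⟩
    · grw [← min_egirth_edist_le_egirth_sup_edge, ← hgirth, ← hux, min_self]
    · rw [degree_sup_edge (hfar hux).1 (hfar hux).2]
    · exact pi_single_one_add_single_one_le (hfar hux).1 (tsub_pos_of_lt hu).ne' hx
  · refine ⟨redirectEdge G u v x y, x, y, ?_, fun w ↦ ?_, hxy⟩
    · exact le_egirth_redirectEdge hgirth huv (by gcongr) (by gcongr) (by gcongr)
    · exact degree_redirectEdge huv (hfar hux).1 (hfar hux).2 (hfar hvy).1 (hfar hvy).2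
        (hfar huy).1 w

open scoped Classical in
theorem exists_isRegularOfDegree_le_egirth {r k : ℕ} (hk : 2 ≤ k)
    (heven : Even (r * Fintype.card V)) (hcard : 4 * ∑ i ∈ range k, r ^ i < Fintype.card V) :
    ∃ G : SimpleGraph V, G.IsRegularOfDegree r ∧ k + 1 ≤ G.egirth := by
  obtain ⟨G, ⟨hgirth, hdeg⟩, hmax⟩ :=
    (Set.toFinite {G : SimpleGraph V | k + 1 ≤ G.egirth ∧ ∀ w, G.degree w ≤ r}).exists_maximalFor
      (fun G w ↦ G.degree w) _ ⟨⊥, by simp [-le_egirth]⟩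
  by_contra! h
  obtain ⟨G', hgirth', hdeg', hlt⟩ := exists_degree_lt_degree_of_not_isRegularOfDegree hk heven
    hcard hgirth hdeg fun hreg ↦ (h G hreg).not_ge hgirth
  exact hlt.not_ge (hmax ⟨hgirth', hdeg'⟩ hlt.le)

end Regular

theorem stmt_8 (r g : ℕ) (hr : 2 ≤ r) (hg : 3 ≤ g) :
    ∃ (n : ℕ) (G : SimpleGraph (Fin n)) (_ : DecidableRel G.Adj),
      n ≤ 4 * g * r ^ g ∧ G.IsRegularOfDegree r ∧ (g : ℕ∞) ≤ G.girth := by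
  classical
  have hgeom : ∑ i ∈ range g, r ^ i < r ^ g := Nat.geomSum_lt hr fun _ ↦ mem_range.1
  have : NeZero (4 * r ^ g) := ⟨by positivity⟩
  have heven : Even (r * Fintype.card (Fin (4 * r ^ g))) := by
    rw [Fintype.card_fin]
    exact ⟨2 * r ^ (g + 1), by ring⟩
  obtain ⟨G, hreg, hgirth⟩ :=
    exists_isRegularOfDegree_le_egirth (k := g) (by lia) heven (by simpa using hgeom)
  have hcyclic : ¬G.IsAcyclic := fun hacyclic ↦ by
    have := minDegree_le_one_of_isAcyclic hacyclic
    rw [hreg.minDegree_eq] at this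
    lia
  refine ⟨4 * r ^ g, G, inferInstance, by gcongr; lia, hreg, ?_⟩
  rw [girth, ENat.natCast_toNat (mt egirth_eq_top.1 hcyclic)]
  exact le_self_add.trans hgirth
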